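/- Let C be a finite alphabet and Γ a finite C-labeled directed graph. For every vertex v of Γ, the uniform Bernoulli measure μ(F_v) of the set F_v of label sequences along left-infinite paths ending at v is a rational number. -/

import Mathlib

open MeasureTheory

def pathSet {V C : Type*} (e : V → C → V → Prop) (v : V) : Set (ℕ → C) :=
  {x | ∃ p : ℕ → V, p 0 = v ∧ ∀ k, e (p (k + 1)) (x k) (p k)}

/-- There is a path of length `n` ending at `w`, reading `x m, x (m+1), …` backwards. -/
def aliveAt {V C : Type*} (e : V → C → V → Prop) (x : ℕ → C) : ℕ → ℕ → V → Prop
  | 0, _, _ => True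
  | n + 1, m, w => ∃ u, e u (x m) w ∧ aliveAt e x n (m + 1) u

/-- Transition of the subset automaton. -/
def stepSet {V C : Type*} (e : V → C → V → Prop) (S : Set V) (c : C) : Set V :=
  {u | ∃ w ∈ S, e u c w}

def aliveSet {V C : Type*} (e : V → C → V → Prop) (n m : ℕ) (S : Set V) : Set (ℕ → C) :=
  {x | ∃ w ∈ S, aliveAt e x n m w}

theorem mem_aliveSet_succ {V C : Type*} (e : V → C → V → Prop) (n m : ℕ) (S : Set V)
    (x : ℕ → C) :
    x ∈ aliveSet e (n + 1) m S ↔ x ∈ aliveSet e n (m + 1) (stepSet e S (x m)) := by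
  simp only [aliveSet, stepSet, aliveAt, Set.mem_ofPred_eq]
  constructor
  · rintro ⟨w, hw, u, h1, h2⟩
    exact ⟨u, ⟨w, hw, h1⟩, h2⟩
  · rintro ⟨u, ⟨w, hw, h1⟩, h2⟩
    exact ⟨w, hw, u, h1, h2⟩

theorem aliveAt_pred {V C : Type*} (e : V → C → V → Prop) (x : ℕ → C) (n : ℕ) :
    ∀ (m : ℕ) (w : V), aliveAt e x (n + 1) m w → aliveAt e x n m w := by
  induction n with
  | zero => intro m w _; trivial
  | succ n ih =>
    rintro m w ⟨u, h1, h2⟩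
    exact ⟨u, h1, ih _ _ h2⟩

theorem aliveAt_anti {V C : Type*} (e : V → C → V → Prop) (x : ℕ → C) (m : ℕ) (w : V)
    {a b : ℕ} (hab : a ≤ b) (h : aliveAt e x b m w) : aliveAt e x a m w := by
  induction hab with
  | refl => exact h
  | step _ ih => exact ih (aliveAt_pred e x _ _ _ h)

theorem alive_next {V C : Type*} [Fintype V] (e : V → C → V → Prop) (x : ℕ → C) (m : ℕ) (w : V)
    (h : ∀ n, aliveAt e x n m w) :
    ∃ u, e u (x m) w ∧ ∀ n, aliveAt e x n (m + 1) u := by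
  by_contra hcon
  have h1 : ∀ u, ∃ n, e u (x m) w → ¬ aliveAt e x n (m + 1) u := by
    intro u
    by_cases hu : e u (x m) w
    · by_contra h2
      refine hcon ⟨u, hu, fun n => ?_⟩
      by_contra h3
      exact h2 ⟨n, fun _ => h3⟩
    · exact ⟨0, fun h => absurd h hu⟩
  choose N hN using h1
  obtain ⟨u, hu, hu2⟩ := h (Finset.univ.sup N + 1)
  exact hN u hu (aliveAt_anti e x _ _ (Finset.le_sup (Finset.mem_univ u)) hu2)

theorem pathSet_eq {V C : Type*} [Fintype V] (e : V → C → V → Prop) (v : V) :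
    pathSet e v = ⋂ n, aliveSet e n 0 {v} := by
  ext x
  simp only [Set.mem_iInter]
  constructor
  · rintro ⟨p, hp, hk⟩ n
    have : ∀ n m, aliveAt e x n m (p m) := by
      intro n
      induction n with
      | zero => intro m; trivial
      | succ n ih => intro m; exact ⟨p (m + 1), hk m, ih _⟩
    exact ⟨v, rfl, hp ▸ this n 0⟩
  · intro h
    have h0 : ∀ n, aliveAt e x n 0 v := by
      intro n
      obtain ⟨w, hw, h2⟩ := h n
      rw [Set.mem_singleton_iff] at hw
      exact hw ▸ h2
    have hx := alive_next e x
    choose g hg1 hg2 using hx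
    let p : ∀ m, {w : V // ∀ n, aliveAt e x n m w} := fun m =>
      Nat.rec ⟨v, h0⟩ (fun m w => ⟨g m w.1 w.2, hg2 m w.1 w.2⟩) m
    exact ⟨fun m => (p m).1, rfl, fun k => hg1 k (p k).1 (p k).2⟩

theorem aliveSet_measurable {V C : Type*} [Fintype C] [MeasurableSpace C]
    [MeasurableSingletonClass C] (e : V → C → V → Prop) (n : ℕ) :
    ∀ (m : ℕ) (S : Set V), MeasurableSet (aliveSet e n m S) := by
  induction n with
  | zero => intro m S; simp [aliveSet, aliveAt]
  | succ n ih =>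
    intro m S
    have : aliveSet e (n + 1) m S =
        ⋃ c, ((fun x : ℕ → C => x m) ⁻¹' {c}) ∩ aliveSet e n (m + 1) (stepSet e S c) := by
      ext x
      rw [mem_aliveSet_succ]
      simp
    rw [this]
    exact MeasurableSet.iUnion fun c =>
      (measurable_pi_apply m (measurableSet_singleton c)).inter (ih _ _)

/-- The transition operator of the subset automaton. -/
noncomputable def transOp {V C : Type*} [Fintype C] (e : V → C → V → Prop) :
    (Set V → ℚ) →ₗ[ℚ] (Set V → ℚ) where
  toFun h S := (∑ c, h (stepSet e S c)) / (Fintype.card C : ℚ)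
  map_add' f g := by
    ext S
    simp [Finset.sum_add_distrib, add_div]
  map_smul' a f := by
    ext S
    simp [← Finset.mul_sum, mul_div_assoc]

open Classical in
noncomputable def neInd (V : Type*) : Set V → ℚ := fun S => if S.Nonempty then 1 else 0

theorem transOp_pow_bound {V C : Type*} [Fintype C] [Nonempty C] (e : V → C → V → Prop)
    (g : Set V → ℚ) (M : ℚ) (hM : ∀ S, |g S| ≤ M) (n : ℕ) :
    ∀ S, |(transOp e ^ n) g S| ≤ M := by
  have hq : (0 : ℚ) < Fintype.card C := by exact_mod_cast Fintype.card_pos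
  induction n with
  | zero => simpa using hM
  | succ n ih =>
    intro S
    rw [pow_succ', Module.End.mul_apply]
    change |(∑ c, ((transOp e ^ n) g) (stepSet e S c)) / (Fintype.card C : ℚ)| ≤ M
    rw [abs_div, abs_of_pos hq, div_le_iff₀ hq]
    calc _ ≤ ∑ c, |((transOp e ^ n) g) (stepSet e S c)| := Finset.abs_sum_le_sum_abs _ _
      _ ≤ ∑ c : C, M := Finset.sum_le_sum fun c _ => ih _
      _ = _ := by simp [mul_comm]

theorem transOp_pow_nonneg {V C : Type*} [Fintype C] (e : V → C → V → Prop) (n : ℕ) :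
    ∀ S, 0 ≤ (transOp e ^ n) (neInd V) S := by
  induction n with
  | zero => intro S; simp only [pow_zero, Module.End.one_apply, neInd]; split_ifs <;> simp
  | succ n ih =>
    intro S
    rw [pow_succ', Module.End.mul_apply]
    exact div_nonneg (Finset.sum_nonneg fun c _ => ih _) (by positivity)

theorem measure_alive {V C : Type*} [Fintype C] [Nonempty C]
    [MeasurableSpace C] [MeasurableSingletonClass C]
    (e : V → C → V → Prop) (μ : Measure (ℕ → C))
    (hμ : ∀ (m : ℕ) (y : Fin m → C),
      μ {f | ∀ i : Fin m, f (i : ℕ) = y i} = ((Fintype.card C : ENNReal))⁻¹ ^ m) (n : ℕ) :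
    ∀ (m : ℕ) (y : Fin m → C) (S : Set V),
      μ ({f | ∀ i : Fin m, f (i : ℕ) = y i} ∩ aliveSet e n m S) =
        ENNReal.ofReal (((transOp (C := C) e ^ n) (neInd V) S : ℚ) : ℝ) *
          ((Fintype.card C : ENNReal))⁻¹ ^ m := by
  induction n with
  | zero =>
    intro m y S
    by_cases hS : S.Nonempty
    · have : aliveSet (C := C) e 0 m S = Set.univ := by
        ext x; simpa [aliveSet, aliveAt, Set.Nonempty] using hS
      rw [this, Set.inter_univ, hμ]
      simp [neInd, hS]
    · have : aliveSet (C := C) e 0 m S = ∅ := by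
        ext x; simpa [aliveSet, aliveAt, Set.not_nonempty_iff_eq_empty, Set.eq_empty_iff_forall_notMem] using hS
      rw [this, Set.inter_empty]
      simp [neInd, hS]
  | succ n ih =>
    intro m y S
    set A := {f : ℕ → C | ∀ i : Fin m, f (i : ℕ) = y i} ∩ aliveSet e (n + 1) m S with hA
    have hmeas : ∀ c ∈ (Finset.univ : Finset C),
        MeasurableSet ((fun x : ℕ → C => x m) ⁻¹' {c}) := fun c _ =>
      measurable_pi_apply m (measurableSet_singleton c)
    have h1 := sum_measure_preimage_singleton (μ := μ.restrict A) Finset.univ hmeas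
    have h2 : ∀ c : C, (μ.restrict A) ((fun x : ℕ → C => x m) ⁻¹' {c}) =
        ENNReal.ofReal (((transOp (C := C) e ^ n) (neInd V) (stepSet e S c) : ℚ) : ℝ) *
          ((Fintype.card C : ENNReal))⁻¹ ^ (m + 1) := by
      intro c
      rw [Measure.restrict_apply (hmeas c (Finset.mem_univ _)),
        ← ih (m + 1) (Fin.snoc y c) (stepSet e S c)]
      congr 1
      ext x
      simp only [hA, Set.mem_inter_iff, Set.mem_preimage, Set.mem_singleton_iff,
        Set.mem_ofPred_eq, mem_aliveSet_succ, Fin.forall_fin_succ', Fin.snoc_castSucc,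
        Fin.snoc_last, Fin.val_castSucc, Fin.val_last]
      constructor
      · rintro ⟨rfl, h, h'⟩; exact ⟨⟨h, rfl⟩, h'⟩
      · rintro ⟨⟨h, rfl⟩, h'⟩; exact ⟨rfl, h, h'⟩
    simp only [h2, Finset.coe_univ, Set.preimage_univ, Measure.restrict_apply_univ] at h1
    rw [← h1, ← Finset.sum_mul, pow_succ', ← mul_assoc, pow_succ' (transOp e),
      Module.End.mul_apply]
    congr 1
    change _ = ENNReal.ofReal (((∑ c, ((transOp e ^ n) (neInd V)) (stepSet e S c)) /
      (Fintype.card C : ℚ) : ℚ) : ℝ)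
    have hq : (0 : ℝ) < Fintype.card C := by exact_mod_cast Fintype.card_pos
    push_cast
    rw [ENNReal.ofReal_div_of_pos hq, ENNReal.ofReal_sum_of_nonneg, ENNReal.ofReal_natCast,
      div_eq_mul_inv]
    intro c _
    exact_mod_cast transOp_pow_nonneg e n _

/-- A power-bounded operator on rational vectors: limits of orbits are rational. -/
theorem limit_rational {ι : Type*} [Finite ι] (P : (ι → ℚ) →ₗ[ℚ] (ι → ℚ))
    (hP : ∀ g : ι → ℚ, ∃ M : ℚ, ∀ n i, |(P ^ n) g i| ≤ M)
    (f : ι → ℚ) (i : ι) (L : ℝ)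
    (hL : Filter.Tendsto (fun n => (((P ^ n) f i : ℚ) : ℝ)) Filter.atTop (nhds L)) :
    ∃ q : ℚ, L = q := by
  -- Cesàro sums
  have hces : ∀ (g : ι → ℚ) (i : ι), Filter.Tendsto
      (fun n : ℕ => (n : ℝ)⁻¹ * ((((P ^ n) g i - g i : ℚ)) : ℝ)) Filter.atTop (nhds 0) := by
    intro g i
    obtain ⟨M, hM⟩ := hP g
    refine squeeze_zero_norm (a := fun n : ℕ => (n : ℝ)⁻¹ * (2 * M : ℝ)) ?_ ?_
    · intro n
      rw [norm_mul, Real.norm_eq_abs, abs_of_nonneg (by positivity : (0:ℝ) ≤ (n:ℝ)⁻¹)]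
      gcongr
      rw [Real.norm_eq_abs]
      have h1 : |(P ^ n) g i - g i| ≤ 2 * M := by
        have a := hM n i
        have b := hM 0 i
        simp only [pow_zero, Module.End.one_apply] at b
        calc _ ≤ |(P ^ n) g i| + |g i| := abs_sub _ _
          _ ≤ _ := by linarith
      exact_mod_cast h1
    · simpa using (tendsto_inv_atTop_nhds_zero_nat (𝕜 := ℝ)).mul_const (2 * M : ℝ)
  have htel : ∀ (g : ι → ℚ) (n : ℕ),
      ∑ k ∈ Finset.range n, (P ^ k) ((P - 1) g) = (P ^ n) g - g := by
    intro g n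
    have : ∀ k, (P ^ k) ((P - 1) g) = (P ^ (k + 1)) g - (P ^ k) g := by
      intro k
      simp [pow_succ]
    simp only [this]
    rw [Finset.sum_range_sub (fun k => (P ^ k) g)]
    simp
  have hfix : ∀ (a : ι → ℚ), (P - 1) a = 0 → ∀ k, (P ^ k) a = a := by
    intro a ha k
    have h1 : P a = a := by simpa [sub_eq_zero] using ha
    induction k with
    | zero => simp
    | succ k ih => rw [pow_succ, Module.End.mul_apply, h1, ih]
  have hdisj : Disjoint (LinearMap.ker (P - 1)) (LinearMap.range (P - 1)) := by
    rw [Submodule.disjoint_def]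
    rintro a ha ⟨g, rfl⟩
    rw [LinearMap.mem_ker] at ha
    ext j
    have h1 := hces g j
    have h2 : Filter.Tendsto (fun n : ℕ => (n : ℝ)⁻¹ * ((((P ^ n) g j - g j : ℚ)) : ℝ))
        Filter.atTop (nhds (((P - 1) g j : ℚ) : ℝ)) := by
      refine tendsto_const_nhds.congr' ?_
      filter_upwards [Filter.eventually_gt_atTop 0] with n hn
      have h3 := congrFun (htel g n) j
      simp only [hfix _ ha, Finset.sum_const, Finset.card_range, Pi.smul_apply,
        Pi.sub_apply, nsmul_eq_mul] at h3
      rw [← h3]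
      have : (n : ℝ) ≠ 0 := by positivity
      push_cast
      simp [this]
    exact_mod_cast tendsto_nhds_unique h2 h1
  have htop : LinearMap.ker (P - 1) ⊔ LinearMap.range (P - 1) = ⊤ := by
    apply Submodule.eq_top_of_disjoint _ _ _ hdisj
    rw [add_comm, LinearMap.finrank_range_add_finrank_ker]
  have hf : f ∈ LinearMap.ker (P - 1) ⊔ LinearMap.range (P - 1) := htop ▸ Submodule.mem_top
  obtain ⟨a, ha, b, ⟨g, rfl⟩, hab⟩ := Submodule.mem_sup.1 hf
  refine ⟨a i, ?_⟩
  have h1 := hL.cesaro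
  have h2 := (hces g i).const_add ((a i : ℚ) : ℝ)
  rw [add_zero] at h2
  refine tendsto_nhds_unique h1 (h2.congr' ?_)
  filter_upwards [Filter.eventually_gt_atTop 0] with n hn
  have h3 := congrFun (htel g n) i
  have h4 : ∑ k ∈ Finset.range n, (P ^ k) f i = n * a i + ((P ^ n) g i - g i) := by
    rw [← hab]
    simp only [map_add, Pi.add_apply, Finset.sum_add_distrib, hfix a ha]
    rw [← Pi.sub_apply, ← h3]
    simp
  have h5 : ∑ k ∈ Finset.range n, (((P ^ k) f i : ℚ) : ℝ) =
      ((n * a i + ((P ^ n) g i - g i) : ℚ) : ℝ) := by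
    rw [← h4]; push_cast; rfl
  rw [h5]
  have : (n : ℝ) ≠ 0 := by positivity
  push_cast
  field_simp

/-- for a finite labeled graph, the uniform Bernoulli measure of each
set `F_v` is a rational number. -/
theorem stmt10 {V C : Type*} [Fintype V] [Fintype C] [Nonempty C]
    [MeasurableSpace C] [MeasurableSingletonClass C]
    (e : V → C → V → Prop) (μ : Measure (ℕ → C))
    (hμ : ∀ (m : ℕ) (y : Fin m → C),
      μ {f | ∀ i : Fin m, f (i : ℕ) = y i} = ((Fintype.card C : ENNReal))⁻¹ ^ m)
    (v : V) :
    ∃ q : ℚ, μ (pathSet e v) = ENNReal.ofReal (q : ℝ) := by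
  have huniv : μ Set.univ = 1 := by simpa using hμ 0 Fin.elim0
  have hprob : IsProbabilityMeasure μ := ⟨huniv⟩
  have hn : ∀ n, μ (aliveSet e n 0 {v}) =
      ENNReal.ofReal (((transOp (C := C) e ^ n) (neInd V) {v} : ℚ) : ℝ) := by
    intro n
    simpa using measure_alive e μ hμ n 0 Fin.elim0 {v}
  have hanti : Antitone fun n => aliveSet (C := C) e n 0 {v} := by
    rintro a b hab x ⟨w, hw, h⟩
    exact ⟨w, hw, aliveAt_anti e x _ _ hab h⟩
  have hlim := tendsto_measure_iInter_atTop (μ := μ)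
    (fun n => (aliveSet_measurable e n 0 {v}).nullMeasurableSet) hanti
    ⟨0, measure_ne_top _ _⟩
  rw [← pathSet_eq] at hlim
  have hreal := (ENNReal.tendsto_toReal (measure_ne_top μ (pathSet e v))).comp hlim
  have hL : Filter.Tendsto (fun n => (((transOp (C := C) e ^ n) (neInd V) {v} : ℚ) : ℝ))
      Filter.atTop (nhds (μ (pathSet e v)).toReal) := by
    refine hreal.congr fun n => ?_
    simp only [Function.comp_apply, hn]
    exact ENNReal.toReal_ofReal (by exact_mod_cast transOp_pow_nonneg e n _)
  obtain ⟨q, hq⟩ := limit_rational (transOp (C := C) e) (fun g => by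
    obtain ⟨M, hM⟩ := (Set.finite_range fun S => |g S|).bddAbove
    exact ⟨M, transOp_pow_bound e g M fun S => hM ⟨S, rfl⟩⟩) _ _ _ hL
  exact ⟨q, by rw [← hq, ENNReal.ofReal_toReal (measure_ne_top _ _)]⟩
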